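/- Deligne's completeness theorem for coherent categories: Let C be a small category with finite limits such that (i) every morphism of C factors as an effective epimorphism followed by a monomorphism; (ii) effective epimorphisms are stable under pullback, i.e. for every effective epimorphism f : X ⟶ Z and every morphism g : Y ⟶ Z, the pullback projection pullback.snd : X ×_Z Y ⟶ Y is an effective epimorphism; (iii) for every object X, any two elements a, b of the subobject poset Subobject X have a least upper bound and Subobject X has a least element, and for every morphism g : Y ⟶ X the pullback map Subobject X → Subobject Y carries these least upper bounds to least upper bounds and the least element to the least element; and (iv) C is consistent, meaning that for a terminal object of C the least element of its subobject poset is not the top element. Then there exists a functor F : C ⥤ Type such that: (1) F preserves finite limits; (2) for every effective epimorphism f of C, the function F.map f is surjective; (3) for every object X of C, whenever c is a least upper bound of subobjects a and b of X one has Set.range (F.map c.arrow) = Set.range (F.map a.arrow) ∪ Set.range (F.map b.arrow), and if z is the least element of Subobject X then Set.range (F.map z.arrow) = ∅. -/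

import Mathlib

open CategoryTheory Limits

/-!
Say that an object is void if its least subobject is the top one. In a left exact functor `G` that
is empty on the void objects, an element over the base of a finite cover can be made to lift along
one of the arrows of the cover. Indeed `G` is a filtered colimit of corepresentables; replacing
each of the corepresenting objects by its pullback along an arrow of the cover freely adjoins a
lift, and the result is still empty on the void objects unless one of these pullbacks is void. If
this happened for each arrow of the cover, then since the colimit is filtered it would happen for
all of them at a single stage, and the object at this stage would be void although `G` has an
element there.

Lifting one element after another solves every finite set of lifting problems, and an ultraproduct
of the solutions solves all problems posed by the elements of `G` at once. Countably many
repetitions, starting from the functor corepresented by a non-void object, give the model.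
-/

universe u

namespace Deligne

open Opposite

variable {C : Type*} [Category* C]

/-- A finite-limit-preserving functor to types that is empty on the objects of `E`: the invariant
kept throughout the construction of a model. -/
structure IsLexAvoiding (E : ObjectProperty C) (G : C ⥤ Type u) : Prop where
  preservesFiniteLimits : PreservesFiniteLimits G
  isEmpty : ∀ X, E X → IsEmpty (G.obj X)

lemma IsLexAvoiding.colimit {E : ObjectProperty C} {J : Type*} [Category* J]
    [HasColimitsOfShape J (Type u)] [HasExactColimitsOfShape J (Type u)]
    {K : J ⥤ C ⥤ Type u} (hK : ∀ j, IsLexAvoiding E (K.obj j)) :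
    IsLexAvoiding E (colimit K) where
  preservesFiniteLimits :=
    ObjectProperty.prop_colimit ObjectProperty.preservesFiniteLimits K
      fun j ↦ (hK j).preservesFiniteLimits
  isEmpty X hX := ⟨fun x ↦ by
    obtain ⟨j, x, -⟩ := Types.jointly_surjective_of_isColimit
      (isColimitOfPreserves ((evaluation _ _).obj X) (colimit.isColimit K)) x
    exact ((hK j).isEmpty X hX).false x⟩

lemma map_mem_range {G G' : C ⥤ Type u} (α : G ⟶ G') {X Y : C} {p : X ⟶ Y}
    {y : G.obj Y} (hy : y ∈ Set.range (G.map p)) : α.app Y y ∈ Set.range (G'.map p) := by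
  obtain ⟨x, rfl⟩ := hy
  exact ⟨α.app X x, (NatTrans.naturality_apply α p x).symm⟩

lemma map_ofLE_arrow (F : C ⥤ Type u) {X : C} {a c : Subobject X} (h : a ≤ c) (x : F.obj (a : C)) :
    F.map c.arrow (F.map (a.ofLE c h) x) = F.map a.arrow x := by
  rw [← Functor.map_comp_apply, Subobject.ofLE_arrow]

lemma range_map_arrow_subset (F : C ⥤ Type u) {X : C} {a c : Subobject X} (h : a ≤ c) :
    Set.range (F.map a.arrow) ⊆ Set.range (F.map c.arrow) := by
  rintro _ ⟨x, rfl⟩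
  exact ⟨_, map_ofLE_arrow F h x⟩

section ReducedProduct

/-- The pointwise product of a family of functors to types. -/
def piFunctor {I : Type u} (F : I → C ⥤ Type u) : C ⥤ Type u where
  obj X := ∀ i, (F i).obj X
  map f := ↾fun x i ↦ (F i).map f (x i)

/-- The map into a pointwise product with given components. -/
def piLift {I : Type u} {F : I → C ⥤ Type u} {G : C ⥤ Type u} (α : ∀ i, G ⟶ F i) :
    G ⟶ piFunctor F where
  app _ := ↾fun y i ↦ (α i).app _ y
  naturality _ _ f := by
    ext y
    funext i
    exact NatTrans.naturality_apply (α i) f y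

lemma preservesFiniteLimits_piFunctor {I : Type u} {F : I → C ⥤ Type u}
    (hF : ∀ i, PreservesFiniteLimits (F i)) : PreservesFiniteLimits (piFunctor F) where
  preservesFiniteLimits J _ _ := ⟨fun {K} ↦ ⟨fun {c} hc ↦ by
    rw [Types.isLimit_iff]
    intro s hs
    have h i := (Types.isLimit_iff _).1 ⟨isLimitOfPreserves (F i) hc⟩ (fun j ↦ s j i)
      fun f ↦ congrFun (hs f) i
    choose x hx hx' using h
    exact ⟨x, fun j ↦ funext fun i ↦ hx i j, fun y hy ↦ funext fun i ↦
      hx' i (y i) fun j ↦ congrFun (hy j) i⟩⟩⟩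

variable {I : Type u} (F : I → C ⥤ Type u) (l : Filter I)

instance isCofiltered_mem_filter : IsCofiltered {U : Set I // U ∈ l} :=
  have : Nonempty {U : Set I // U ∈ l} := ⟨⟨Set.univ, Filter.univ_mem⟩⟩
  have : IsCodirectedOrder {U : Set I // U ∈ l} := ⟨fun U V ↦
    ⟨⟨U ∩ V, Filter.inter_mem U.2 V.2⟩, Set.inter_subset_left, Set.inter_subset_right⟩⟩
  inferInstance

/-- The products of `F` over the members of the filter `l`, with the restriction maps between
them. -/
def partialProducts : {U : Set I // U ∈ l}ᵒᵖ ⥤ C ⥤ Type u where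
  obj U := piFunctor fun i : U.unop.1 ↦ F i
  map h := { app _ := ↾fun x i ↦ x ⟨i, h.unop.le i.2⟩ }

/-- The reduced product of the functors `F i` modulo the filter `l`, encoded as a filtered colimit
of products rather than as a quotient of `∏ i, F i` (the two differ when some `F i` is empty). -/
noncomputable def reducedProduct : C ⥤ Type u := colimit (partialProducts F l)

variable {F}

lemma isLexAvoiding_reducedProduct [l.NeBot] {E : ObjectProperty C}
    (hF : ∀ i, IsLexAvoiding E (F i)) : IsLexAvoiding E (reducedProduct F l) :=
  IsLexAvoiding.colimit fun U ↦
    { preservesFiniteLimits :=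
        preservesFiniteLimits_piFunctor fun i ↦ (hF i).preservesFiniteLimits
      isEmpty := fun X hX ↦
        have ⟨i, hi⟩ := l.nonempty_of_mem U.unop.2
        ⟨fun x ↦ ((hF i).isEmpty X hX).false (x ⟨i, hi⟩)⟩ }

variable {G : C ⥤ Type u}

/-- The map to a reduced product induced by a family of maps to the factors. -/
noncomputable def toReducedProduct (α : ∀ i, G ⟶ F i) : G ⟶ reducedProduct F l :=
  piLift (fun i : (Set.univ : Set I) ↦ α i) ≫
    colimit.ι (partialProducts F l) (op ⟨Set.univ, Filter.univ_mem⟩)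

lemma piLift_comp_ι (α : ∀ i, G ⟶ F i) (U : {U : Set I // U ∈ l}) :
    piLift (fun i : U.1 ↦ α i) ≫ colimit.ι (partialProducts F l) (op U) =
      toReducedProduct l α := by
  let f : U ⟶ ⟨Set.univ, Filter.univ_mem⟩ := homOfLE (Set.subset_univ _)
  rw [toReducedProduct, ← colimit.w (partialProducts F l) f.op]
  rfl

lemma toReducedProduct_mem_range (α : ∀ i, G ⟶ F i) {X Y : C} {p : X ⟶ Y} {y : G.obj Y}
    (h : ∀ᶠ i in l, (α i).app Y y ∈ Set.range ((F i).map p)) :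
    (toReducedProduct l α).app Y y ∈ Set.range ((reducedProduct F l).map p) := by
  let U : {U : Set I // U ∈ l} := ⟨_, h⟩
  choose x hx using fun i : U.1 ↦ i.2
  rw [← piLift_comp_ι l α U]
  exact map_mem_range (colimit.ι (partialProducts F l) (op U)) ⟨x, funext hx⟩

end ReducedProduct

section FiniteCover

variable [HasPullbacks C]

/-- A finite family of arrows into `base` that cover it relative to the class `E` of objects to be
kept empty: a map into `base` whose pullbacks along all the arrows lie in `E` has its source in
`E`. -/
structure FiniteCover (E : ObjectProperty C) where
  base : C
  arrows : Set (Over base)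
  finite : arrows.Finite
  covers : ∀ ⦃Z : C⦄ (h : Z ⟶ base), (∀ f ∈ arrows, E (pullback h f.hom)) → E Z

namespace FiniteCover

variable {E : ObjectProperty C}

/-- The element `y` of `G` over the base of the cover lifts along some arrow of the cover. -/
def Lifts (𝒮 : FiniteCover E) (G : C ⥤ Type u) (y : G.obj 𝒮.base) : Prop :=
  ∃ f ∈ 𝒮.arrows, y ∈ Set.range (G.map f.hom)

lemma Lifts.map {𝒮 : FiniteCover E} {G G' : C ⥤ Type u} {y : G.obj 𝒮.base}
    (h : 𝒮.Lifts G y) (α : G ⟶ G') : 𝒮.Lifts G' (α.app _ y) :=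
  let ⟨f, hf, hy⟩ := h
  ⟨f, hf, map_mem_range α hy⟩

end FiniteCover

end FiniteCover

section Small

variable {C : Type u} [SmallCategory C]

lemma isLexAvoiding_shrinkCoyoneda {E : ObjectProperty C} {X : C}
    (hX : ∀ W, (X ⟶ W) → ¬ E W) : IsLexAvoiding E (shrinkCoyoneda.{u}.obj (op X)) where
  preservesFiniteLimits := inferInstance
  isEmpty W hW := ⟨fun w ↦ hX W (shrinkCoyonedaObjObjEquiv w) hW⟩

instance hasExactColimitsOfShape_nat : HasExactColimitsOfShape ℕ (Type u) :=
  HasExactColimitsOfShape.of_domain_equivalence _ (AsSmall.equiv.{0, 0, u} (C := ℕ)).symm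

section AdjoinLift

variable [HasPullbacks C] (G : C ⥤ Type u) {X Y : C} (p : X ⟶ Y) (y : G.obj Y)

/-- The pullbacks `W ×[Y] X` of `p`, indexed by the elements `w : G.obj W` equipped with a map
`W ⟶ Y` sending `w` to `y`. -/
noncomputable def liftDiagram : Over (G.elementsMk Y y) ⥤ C :=
  Over.post (CategoryOfElements.π G) ⋙ Over.pullback p ⋙ Over.forget X

/-- The projections `W ×[Y] X ⟶ W`. -/
noncomputable def liftDiagramFst :
    liftDiagram G p y ⟶ Over.forget (G.elementsMk Y y) ⋙ CategoryOfElements.π G where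
  app j := pullback.fst j.hom.val p
  naturality _ _ _ := pullback.lift_fst _ _ _

/-- The projections `W ×[Y] X ⟶ X`. -/
noncomputable def liftDiagramSnd (j : Over (G.elementsMk Y y)) : (liftDiagram G p y).obj j ⟶ X :=
  pullback.snd j.hom.val p

/-- The functor obtained from `G` by freely adjoining a preimage of `y` along `p`: the filtered
colimit of the functors corepresented by the objects of `liftDiagram G p y`. -/
noncomputable def adjoinLift : C ⥤ Type u :=
  colimit ((liftDiagram G p y).op ⋙ shrinkCoyoneda.{u})

variable {G p y}

/-- The structure maps of the colimit `adjoinLift G p y`. -/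
noncomputable def adjoinLift.ι (j : Over (G.elementsMk Y y)) :
    shrinkCoyoneda.{u}.obj (op ((liftDiagram G p y).obj j)) ⟶ adjoinLift G p y :=
  colimit.ι ((liftDiagram G p y).op ⋙ shrinkCoyoneda.{u}) (op j)

/-- The element of `adjoinLift G p y` represented by a map out of a stage of the colimit. -/
noncomputable def adjoinLift.mk {W : C} (j : Over (G.elementsMk Y y))
    (f : (liftDiagram G p y).obj j ⟶ W) : (adjoinLift G p y).obj W :=
  (ι j).app W (shrinkCoyonedaObjObjEquiv.symm f)

lemma adjoinLift.map_mk {W W' : C} (j : Over (G.elementsMk Y y))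
    (f : (liftDiagram G p y).obj j ⟶ W) (g : W ⟶ W') :
    (adjoinLift G p y).map g (mk j f) = mk j (f ≫ g) := by
  rw [mk, mk, shrinkCoyonedaObjObjEquiv_symm_comp]
  exact (NatTrans.naturality_apply _ _ _).symm

variable (G p y)

/-- The map `G ⟶ adjoinLift G p y` induced by the projections `W ×[Y] X ⟶ W`. Its source is the
colimit of the functors corepresented by the `W`, since `G` is so over all of its elements and
those lying over `y` are final among them. -/
noncomputable def toAdjoinLift [IsCofiltered G.Elements] : G ⟶ adjoinLift G p y :=
  ((Functor.Final.isColimitWhiskerEquiv (Over.forget (G.elementsMk Y y)).op _).symm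
      (Functor.Elements.isColimitCoconeπOpCompShrinkYonedaFlip G)).map (colimit.cocone _)
    (Functor.whiskerRight (NatTrans.op (liftDiagramFst G p y)) shrinkCoyoneda)

lemma toAdjoinLift_app [IsCofiltered G.Elements] (j : Over (G.elementsMk Y y)) :
    (toAdjoinLift G p y).app j.left.fst j.left.snd =
      adjoinLift.mk j ((liftDiagramFst G p y).app j) := by
  have h := ((Functor.Final.isColimitWhiskerEquiv (Over.forget (G.elementsMk Y y)).op _).symm
      (Functor.Elements.isColimitCoconeπOpCompShrinkYonedaFlip G)).ι_map (colimit.cocone _)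
    (Functor.whiskerRight (NatTrans.op (liftDiagramFst G p y)) shrinkCoyoneda) (op j)
  calc (toAdjoinLift G p y).app j.left.fst j.left.snd
      = (toAdjoinLift G p y).app j.left.fst (G.map (shrinkYonedaObjObjEquiv.{u}
          (Y := op j.left.fst) (shrinkYonedaObjObjEquiv.symm (𝟙 j.left.fst))) j.left.snd) := by
        simp
    _ = (adjoinLift.ι j).app j.left.fst
          ((shrinkCoyoneda.{u}.map ((liftDiagramFst G p y).app j).op).app j.left.fst
            (shrinkCoyonedaObjObjEquiv.symm (𝟙 j.left.fst))) :=
        ConcreteCategory.congr_hom (NatTrans.congr_app h j.left.fst) _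
    _ = adjoinLift.mk (W := j.left.fst) j ((liftDiagramFst G p y).app j ≫ 𝟙 _) :=
        congrArg _ (shrinkCoyoneda_map_app_shrinkCoyonedaObjObjEquiv_symm _ _)
    _ = adjoinLift.mk (W := j.left.fst) j ((liftDiagramFst G p y).app j) :=
        congrArg _ (Category.comp_id _)

lemma toAdjoinLift_mem_range [IsCofiltered G.Elements] :
    (toAdjoinLift G p y).app Y y ∈ Set.range ((adjoinLift G p y).map p) := by
  let j : Over (G.elementsMk Y y) := Over.mk (𝟙 _)
  refine ⟨adjoinLift.mk j (liftDiagramSnd G p y j), ?_⟩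
  rw [adjoinLift.map_mk]
  refine Eq.trans ?_ (toAdjoinLift_app G p y j).symm
  congr 1
  exact pullback.condition.symm.trans (Category.comp_id _)

lemma isLexAvoiding_adjoinLift [IsCofiltered G.Elements] {E : ObjectProperty C}
    (hE : ∀ ⦃X Y : C⦄, (X ⟶ Y) → E Y → E X) (h : ∀ j, ¬ E ((liftDiagram G p y).obj j)) :
    IsLexAvoiding E (adjoinLift G p y) :=
  IsLexAvoiding.colimit fun j ↦
    isLexAvoiding_shrinkCoyoneda fun _ f hW ↦ h j.unop (hE f hW)

end AdjoinLift

section Lifting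

variable {E : ObjectProperty C} [HasFiniteLimits C] (hE : ∀ ⦃X Y : C⦄, (X ⟶ Y) → E Y → E X)
include hE

lemma exists_arrow_liftDiagram_avoids {G : C ⥤ Type u} (hG : IsLexAvoiding E G)
    (𝒮 : FiniteCover E) (y : G.obj 𝒮.base) :
    ∃ f ∈ 𝒮.arrows, ∀ j, ¬ E ((liftDiagram G f.hom y).obj j) := by
  by_contra! h
  have := hG.preservesFiniteLimits
  have := G.isCofiltered_elements
  have : Nonempty (Over (G.elementsMk 𝒮.base y)) := ⟨Over.mk (𝟙 _)⟩
  choose! j hj using h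
  classical
  obtain ⟨s, hs⟩ := IsCofiltered.inf_objs_exists (𝒮.finite.toFinset.image j)
  have hE_pullback : ∀ f ∈ 𝒮.arrows, E (pullback s.hom.val f.hom) := fun f hf ↦
    have ⟨t⟩ := hs (Finset.mem_image_of_mem j (𝒮.finite.mem_toFinset.2 hf))
    hE ((liftDiagram G f.hom y).map t) (hj f hf)
  exact (hG.isEmpty _ (𝒮.covers s.hom.val hE_pullback)).false s.left.snd

lemma exists_hom_lifts {G : C ⥤ Type u} (hG : IsLexAvoiding E G) (𝒮 : FiniteCover E)
    (y : G.obj 𝒮.base) :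
    ∃ (G' : C ⥤ Type u) (α : G ⟶ G'), IsLexAvoiding E G' ∧ 𝒮.Lifts G' (α.app _ y) := by
  have := hG.preservesFiniteLimits
  have := G.isCofiltered_elements
  obtain ⟨f, hf, hf'⟩ := exists_arrow_liftDiagram_avoids hE hG 𝒮 y
  exact ⟨adjoinLift G f.hom y, toAdjoinLift G f.hom y, isLexAvoiding_adjoinLift _ _ _ hE hf',
    f, hf, toAdjoinLift_mem_range G f.hom y⟩

lemma exists_hom_forall_mem_lifts {G : C ⥤ Type u} (hG : IsLexAvoiding E G)
    (S : Finset (Σ 𝒮 : FiniteCover E, G.obj 𝒮.base)) :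
    ∃ (G' : C ⥤ Type u) (α : G ⟶ G'), IsLexAvoiding E G' ∧
      ∀ t ∈ S, t.1.Lifts G' (α.app _ t.2) := by
  classical
  induction S using Finset.induction_on with
  | empty => exact ⟨G, 𝟙 G, hG, by simp⟩
  | insert t S _ ih =>
    obtain ⟨G₁, α, hG₁, hS⟩ := ih
    obtain ⟨G₂, β, hG₂, ht⟩ := exists_hom_lifts hE hG₁ t.1 (α.app _ t.2)
    exact ⟨G₂, α ≫ β, hG₂, Finset.forall_mem_insert .. |>.2 ⟨ht, fun s hs ↦ (hS s hs).map β⟩⟩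

lemma exists_hom_forall_lifts {G : C ⥤ Type u} (hG : IsLexAvoiding E G) :
    ∃ (G' : C ⥤ Type u) (α : G ⟶ G'), IsLexAvoiding E G' ∧
      ∀ (𝒮 : FiniteCover E) (y : G.obj 𝒮.base), 𝒮.Lifts G' (α.app _ y) := by
  classical
  choose F α hF hα using exists_hom_forall_mem_lifts hE hG
  let 𝒰 := Ultrafilter.of (Filter.atTop : Filter (Finset (Σ 𝒮 : FiniteCover E, G.obj 𝒮.base)))
  refine ⟨reducedProduct F 𝒰, toReducedProduct 𝒰 α, isLexAvoiding_reducedProduct _ hF,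
    fun 𝒮 y ↦ ?_⟩
  have h_lifts : ∀ᶠ S in (𝒰 : Filter _), 𝒮.Lifts (F S) ((α S).app _ y) :=
    Ultrafilter.of_le _ <| (Filter.eventually_ge_atTop {⟨𝒮, y⟩}).mono fun S hS ↦
      hα S _ (Finset.singleton_subset_iff.1 hS)
  obtain ⟨f, hf, hfy⟩ := (Ultrafilter.eventually_exists_mem_iff 𝒮.finite).1 h_lifts
  exact ⟨f, hf, toReducedProduct_mem_range _ α hfy⟩

theorem exists_isLexAvoiding_lifts {T : C} (hT : ¬ E T) :
    ∃ F : C ⥤ Type u, IsLexAvoiding E F ∧ Nonempty (F.obj T) ∧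
      ∀ (𝒮 : FiniteCover E) (y : F.obj 𝒮.base), 𝒮.Lifts F y := by
  choose N α hN hα using fun (G : C ⥤ Type u) (hG : IsLexAvoiding E G) ↦
    exists_hom_forall_lifts hE hG
  have hT' : IsLexAvoiding E (shrinkCoyoneda.{u}.obj (op T)) :=
    isLexAvoiding_shrinkCoyoneda fun _ f hW ↦ hT (hE f hW)
  let S : ℕ → {G : C ⥤ Type u // IsLexAvoiding E G} :=
    Nat.rec ⟨_, hT'⟩ fun _ G ↦ ⟨N G.1 G.2, hN G.1 G.2⟩
  let β (n : ℕ) : (S n).1 ⟶ (S (n + 1)).1 := α (S n).1 (S n).2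
  let K : ℕ ⥤ C ⥤ Type u := Functor.ofSequence β
  refine ⟨colimit K, IsLexAvoiding.colimit fun n ↦ (S n).2,
    ⟨(colimit.ι K 0).app T (shrinkCoyonedaObjObjEquiv.symm (𝟙 T))⟩, fun 𝒮 y ↦ ?_⟩
  obtain ⟨n, y, rfl⟩ := Types.jointly_surjective_of_isColimit
    (isColimitOfPreserves ((evaluation _ _).obj 𝒮.base) (colimit.isColimit K)) y
  have h_succ : β n ≫ colimit.ι K (n + 1) = colimit.ι K n := by
    rw [← colimit.w K (homOfLE n.le_succ)]
    exact congrArg (· ≫ colimit.ι K (n + 1)) (Functor.ofSequence_map_homOfLE_succ β n).symm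
  have h_app := ConcreteCategory.congr_hom (NatTrans.congr_app h_succ 𝒮.base) y
  exact h_app ▸ (hα (S n).1 (S n).2 𝒮 y).map (colimit.ι K (n + 1))

end Lifting

end Small

/-- Objects whose only subobject is the top one. When least subobjects are stable under pullback
these are the objects that a model of the coherent theory must send to the empty type. -/
def IsVoid : ObjectProperty C := fun X ↦ IsBot (⊤ : Subobject X)

variable [HasPullbacks C] {X Y : C}

lemma pullback_obj_eq_top_iff_factors {f : X ⟶ Y} {a : Subobject Y} :
    (Subobject.pullback f).obj a = ⊤ ↔ a.Factors f := by
  refine ⟨fun h ↦ ?_, fun h ↦ top_le_iff.1 (Subobject.le_of_factors ?_)⟩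
  · simpa using (pullback_factors_iff f a (𝟙 X)).1 (h ▸ Subobject.top_factors _)
  · exact (pullback_factors_iff f a _).2 (Subobject.factors_of_factors_right _ h)

lemma IsVoid.factors (hX : IsVoid X) (f : X ⟶ Y) (a : Subobject Y) : a.Factors f :=
  pullback_obj_eq_top_iff_factors.1 (top_le_iff.1 (hX _))

lemma IsVoid.isBot {a : Subobject X} (ha : IsVoid (a : C)) : IsBot a := fun b ↦
  Subobject.le_of_factors (ha.factors a.arrow b)

lemma IsVoid.of_strongEpi (hX : IsVoid X) (f : X ⟶ Y) [StrongEpi f] : IsVoid Y := fun a ↦ by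
  have hf := hX.factors f a
  have : StrongEpi (a.factorThru f hf ≫ a.arrow) := by rwa [Subobject.factorThru_arrow]
  have : StrongEpi a.arrow := strongEpi_of_strongEpi (a.factorThru f hf) a.arrow
  have : IsIso a.arrow := isIso_of_mono_of_strongEpi _
  exact ((Subobject.isIso_arrow_iff_eq_top a).1 this).ge

section StableBot

variable (hpull_bot : ∀ {X Y : C} (g : Y ⟶ X) (z : Subobject X), IsBot z →
  IsBot ((Subobject.pullback g).obj z))
include hpull_bot

lemma IsVoid.of_hom ⦃X Y : C⦄ (f : X ⟶ Y) (hY : IsVoid Y) : IsVoid X := by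
  rw [IsVoid, ← Subobject.pullback_top f]
  exact hpull_bot f ⊤ hY

lemma isVoid_of_isBot {z : Subobject X} (hz : IsBot z) : IsVoid (z : C) := by
  rw [IsVoid, ← pullback_obj_eq_top_iff_factors.2 z.factors_self]
  exact hpull_bot z.arrow z hz

/-- An effective epimorphism as a cover by a single arrow. -/
noncomputable def coverOfEffectiveEpi
    (hstab : ∀ {X Y Z : C} (f : X ⟶ Z) (g : Y ⟶ Z), EffectiveEpi f →
      EffectiveEpi (pullback.snd f g))
    (f : X ⟶ Y) (hf : EffectiveEpi f) : FiniteCover (IsVoid (C := C)) where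
  base := Y
  arrows := {Over.mk f}
  finite := Set.finite_singleton _
  covers _ h hZ :=
    have := hstab f h hf
    (IsVoid.of_hom hpull_bot (pullbackSymmetry f h).hom (hZ _ rfl)).of_strongEpi (pullback.snd f h)

lemma isVoid_of_isLUB
    (hpull_join : ∀ {X Y : C} (g : Y ⟶ X) (a b c : Subobject X), IsLUB {a, b} c →
      IsLUB {(Subobject.pullback g).obj a, (Subobject.pullback g).obj b}
        ((Subobject.pullback g).obj c))
    {a b c : Subobject X} (hc : IsLUB {a, b} c) {Z : C} (h : Z ⟶ (c : C))
    (ha : IsVoid (pullback h (a.ofLE c (hc.1 (.inl rfl)))))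
    (hb : IsVoid (pullback h (b.ofLE c (hc.1 (.inr rfl))))) : IsVoid Z := by
  have isBot_pullback {d : Subobject X} (hd : d ≤ c) (hd' : IsVoid (pullback h (d.ofLE c hd))) :
      IsBot ((Subobject.pullback (h ≫ c.arrow)).obj d) := by
    refine (IsVoid.of_hom hpull_bot (pullback.lift
      ((Subobject.pullback (h ≫ c.arrow)).obj d).arrow (Subobject.pullbackπ _ d) ?_) hd').isBot
    rw [← cancel_mono c.arrow]
    simpa using (Subobject.isPullback (h ≫ c.arrow) d).w.symm
  have h_lub := hpull_join (h ≫ c.arrow) a b c hc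
  rw [pullback_obj_eq_top_iff_factors.2 (Subobject.factors_comp_arrow h)] at h_lub
  refine fun d ↦ h_lub.2 ?_
  rintro _ (rfl | rfl)
  exacts [isBot_pullback _ ha d, isBot_pullback _ hb d]

/-- The cover of a join of two subobjects by these subobjects. -/
noncomputable def coverOfIsLUB
    (hpull_join : ∀ {X Y : C} (g : Y ⟶ X) (a b c : Subobject X), IsLUB {a, b} c →
      IsLUB {(Subobject.pullback g).obj a, (Subobject.pullback g).obj b}
        ((Subobject.pullback g).obj c))
    {a b c : Subobject X} (hc : IsLUB {a, b} c) : FiniteCover (IsVoid (C := C)) where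
  base := c
  arrows := {Over.mk (a.ofLE c (hc.1 (.inl rfl))), Over.mk (b.ofLE c (hc.1 (.inr rfl)))}
  finite := Set.toFinite _
  covers _ h hZ := isVoid_of_isLUB hpull_bot hpull_join hc h (hZ _ (.inl rfl)) (hZ _ (.inr rfl))

end StableBot

end Deligne

theorem deligne_completeness_general {C : Type u} [SmallCategory C] [HasFiniteLimits C]
    (hstab : ∀ {X Y Z : C} (f : X ⟶ Z) (g : Y ⟶ Z), EffectiveEpi f →
      EffectiveEpi (pullback.snd f g))
    (hpull_join : ∀ {X Y : C} (g : Y ⟶ X) (a b c : Subobject X), IsLUB {a, b} c →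
      IsLUB {(Subobject.pullback g).obj a, (Subobject.pullback g).obj b}
        ((Subobject.pullback g).obj c))
    (hpull_bot : ∀ {X Y : C} (g : Y ⟶ X) (z : Subobject X), IsBot z →
      IsBot ((Subobject.pullback g).obj z))
    (T : C) (hT : ¬ IsBot (⊤ : Subobject T)) :
    ∃ F : C ⥤ Type u,
      PreservesFiniteLimits F ∧
      Nonempty (F.obj T) ∧
      (∀ {X Y : C} (f : X ⟶ Y), EffectiveEpi f → Function.Surjective (F.map f)) ∧
      (∀ (X : C) (a b c : Subobject X), IsLUB {a, b} c →
        Set.range (F.map c.arrow) = Set.range (F.map a.arrow) ∪ Set.range (F.map b.arrow)) ∧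
      (∀ (X : C) (z : Subobject X), IsBot z → Set.range (F.map z.arrow) = ∅) := by
  obtain ⟨F, hF, hFT, hF_lifts⟩ :=
    Deligne.exists_isLexAvoiding_lifts (Deligne.IsVoid.of_hom hpull_bot) hT
  refine ⟨F, hF.preservesFiniteLimits, hFT, fun f hf y ↦ ?_, fun X a b c hc ↦ ?_, fun X z hz ↦ ?_⟩
  · obtain ⟨_, rfl, hy⟩ := hF_lifts (Deligne.coverOfEffectiveEpi hpull_bot hstab f hf) y
    exact hy
  · refine (Set.union_subset (Deligne.range_map_arrow_subset F (hc.1 (.inl rfl)))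
      (Deligne.range_map_arrow_subset F (hc.1 (.inr rfl)))).antisymm' ?_
    rintro _ ⟨w, rfl⟩
    obtain ⟨_, rfl | rfl, v, rfl⟩ := hF_lifts (Deligne.coverOfIsLUB hpull_bot hpull_join hc) w
    · exact .inl ⟨v, (Deligne.map_ofLE_arrow F _ v).symm⟩
    · exact .inr ⟨v, (Deligne.map_ofLE_arrow F _ v).symm⟩
  · have := hF.isEmpty _ (Deligne.isVoid_of_isBot hpull_bot hz)
    exact Set.range_eq_empty _

/-- Deligne's completeness theorem for (small, consistent) coherent categories:
there is a functor to `Type` preserving finite limits, carrying effective epimorphisms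
to surjections, and inducing join-semilattice homomorphisms on subobject posets. -/
theorem deligne_completeness
    (C : Type) [SmallCategory C] [HasFiniteLimits C]
    -- (i) every morphism factors as an effective epi followed by a mono
    (hfact : ∀ {X Z : C} (f : X ⟶ Z), ∃ (I : C) (e : X ⟶ I) (m : I ⟶ Z),
      EffectiveEpi e ∧ Mono m ∧ e ≫ m = f)
    -- (ii) effective epimorphisms are stable under pullback
    (hstab : ∀ {X Y Z : C} (f : X ⟶ Z) (g : Y ⟶ Z), EffectiveEpi f →
      EffectiveEpi (pullback.snd f g))
    -- (iii) joins and least elements of subobject posets, preserved by pullback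
    (hjoin : ∀ (X : C) (a b : Subobject X), ∃ c, IsLUB {a, b} c)
    (hbot : ∀ (X : C), ∃ z : Subobject X, ∀ a, z ≤ a)
    (hpull_join : ∀ {X Y : C} (g : Y ⟶ X) (a b c : Subobject X), IsLUB {a, b} c →
      IsLUB {(Subobject.pullback g).obj a, (Subobject.pullback g).obj b}
        ((Subobject.pullback g).obj c))
    (hpull_bot : ∀ {X Y : C} (g : Y ⟶ X) (z : Subobject X), (∀ a, z ≤ a) →
      ∀ a, (Subobject.pullback g).obj z ≤ a)
    -- (iv) consistency: for a terminal object the least subobject is not the top one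
    (T : C) (hT : IsTerminal T)
    (hcons : ∀ z : Subobject T, (∀ a, z ≤ a) → z ≠ ⊤) :
    ∃ F : C ⥤ Type,
      Nonempty (PreservesFiniteLimits F) ∧
      (∀ {X Y : C} (f : X ⟶ Y), EffectiveEpi f → Function.Surjective (F.map f)) ∧
      (∀ (X : C) (a b c : Subobject X), IsLUB {a, b} c →
        Set.range (F.map c.arrow) = Set.range (F.map a.arrow) ∪ Set.range (F.map b.arrow)) ∧
      (∀ (X : C) (z : Subobject X), (∀ a, z ≤ a) →
        Set.range (F.map z.arrow) = ∅) := by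
  obtain ⟨F, hF, -, h⟩ :=
    deligne_completeness_general hstab hpull_join hpull_bot T fun h ↦ hcons ⊤ h rfl
  exact ⟨F, ⟨hF⟩, h⟩
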